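/- Let A be a 2-dimensional and B an n-dimensional vector space over an algebraically closed field K of characteristic zero, n ≥ 5. Then the affine cone over the secant variety of the Segre product of ℙA* with the Plücker-embedded Grassmannian G(2,B*) coincides with the rank variety: σ̂(Seg(ℙA* × G(2,B*))) = R₄(A*⊗Λ²B*) = {T ∈ A*⊗Λ²B* : there exists a 4-dimensional subspace U ⊂ B* with T ∈ A*⊗Λ²U}. -/

import Mathlib

/-!
Write `V = B*`. A tensor `T ∈ A* ⊗ Λ²V` has contractions `T(f, ξ) ∈ V`, for `f ∈ A**` and
`ξ ∈ V*`, and lies in `A* ⊗ Λ²U` exactly when all of them lie in `U`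
(`contr_mem`, `mem_lam2_of_contr_mem`). Hence `T` belongs to the rank variety `R₄` if and only if
its contractions span a space of dimension at most four (`mem_rankVarietyAB_iff`). This is the
vanishing of `5 × 5` minors, so it passes to Zariski closures (`finrank_span_le_of_mem_zcl`), and it
holds for `α ⊗ (v ∧ w) + β ⊗ (v' ∧ w')`, whose contractions lie in the span of `v, w, v', w'`.
This shows that the secant cone is contained in `R₄`.

Conversely, let `T = e₀ ⊗ ω₀ + e₁ ⊗ ω₁` with `ω₀, ω₁ ∈ Λ²U` and `dim U = 4`. A bivector on `U` is
decomposable as soon as its Pfaffian, a quadratic form in the six Plücker coordinates, vanishes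
(`decomposable_of_pf_eq_zero`). The Pfaffian of `x ω₀ + ω₁` is a polynomial in `x`; if it is of
degree two with nonzero discriminant, its two roots give decomposable bivectors spanning the pencil
of `ω₀` and `ω₁`, and `T` is a sum of two elements `α ⊗ (v ∧ w)` (`pencil_decomposable`). On the
line joining `T` to a fixed tensor with this property, all but finitely many points have it
(`exists_generic_poly`), so a polynomial vanishing on all such sums vanishes along the line, and in
particular at `T` (`mem_zcl_of_line`).
-/

open scoped TensorProduct

open MvPolynomial

noncomputable section

section CoordBasics

variable (K : Type) [Field K]
variable (V : Type) [AddCommGroup V] [Module K V]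

/-- Polynomial coordinate ring of the `K`-vector space `V`, with variables indexed by a
chosen basis of `V`. -/
abbrev Coord : Type := MvPolynomial (Module.Free.ChooseBasisIndex K V) K

/-- Evaluation of a polynomial function at a point of `V`. -/
def evalAt (v : V) : Coord K V →ₐ[K] K :=
  aeval fun i => (Module.Free.chooseBasis K V).repr v i

variable {V}

/-- The ideal of polynomial functions vanishing on a subset `S ⊆ V`. -/
def vanIdeal (S : Set V) : Ideal (Coord K V) :=
  ⨅ x ∈ S, RingHom.ker (evalAt K V x)

/-- The Zariski closure of a subset of `V`. -/
def zcl (S : Set V) : Set V :=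
  {v | ∀ P ∈ vanIdeal K S, evalAt K V v P = 0}

/-- The affine cone over the secant variety of the projective variety whose affine cone
is `X`: the Zariski closure of the set of sums of two elements of `X`. -/
def secantCone (X : Set V) : Set V :=
  zcl K {v | ∃ x ∈ X, ∃ y ∈ X, v = x + y}

/-- The homogeneous degree-`d` component of the vanishing ideal of `S`, as a `K`-subspace
of the coordinate ring. -/
def idealComponent (S : Set V) (d : ℕ) : Submodule K (Coord K V) :=
  (homogeneousSubmodule _ K d) ⊓ Submodule.restrictScalars K (vanIdeal K S)

end CoordBasics

/-!
STATEMENT 14.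
Let `A` be 2-dimensional and `B` be `n`-dimensional (`n ≥ 5`) over an algebraically closed
field `K` of characteristic zero.  Then the affine cone over the secant variety of the Segre
product of `ℙA*` with the Plücker-embedded Grassmannian `G(2,B*)` coincides with the rank
variety:
`σ̂(Seg(ℙA* × G(2,B*))) = R₄(A*⊗Λ²B*) = {T : ∃ U ⊆ B*, dim U = 4, T ∈ A*⊗Λ²U}`.
-/

section Stmt14

variable (K : Type) [Field K] [IsAlgClosed K] [CharZero K]
variable (A B : Type) [AddCommGroup A] [Module K A] [AddCommGroup B] [Module K B]
  [Module.Finite K A] [Module.Finite K B]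

open ExteriorAlgebra

/-- The ambient space `A* ⊗ Λ²(B*)`. -/
abbrev AmbientAB : Type := Module.Dual K A ⊗[K] ↥(⋀[K]^2 (Module.Dual K B))

/-- The affine cone over `Seg(ℙA* × G(2,B*))`: the set of elements `α ⊗ (β₁ ∧ β₂)`. -/
def segGrassCone : Set (AmbientAB K A B) :=
  {T | ∃ (α : Module.Dual K A) (w : ↥(⋀[K]^2 (Module.Dual K B)))
      (v : Fin 2 → Module.Dual K B),
    (w : ExteriorAlgebra K (Module.Dual K B)) = ExteriorAlgebra.ιMulti K 2 v ∧ T = α ⊗ₜ w}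

/-- `Λ²U` as a subspace of `Λ²(B*)`, for a subspace `U ⊆ B*`. -/
def lam2Sub (U : Submodule K (Module.Dual K B)) :
    Submodule K ↥(⋀[K]^2 (Module.Dual K B)) :=
  Submodule.comap (⋀[K]^2 (Module.Dual K B)).subtype
    (Submodule.span K {x | ∃ v : Fin 2 → Module.Dual K B,
      (∀ i, v i ∈ U) ∧ x = ExteriorAlgebra.ιMulti K 2 v})

/-- The rank variety `R_p(A*⊗Λ²B*)`: all tensors lying in `A*⊗Λ²U` for some
`p`-dimensional subspace `U ⊆ B*`. -/
def rankVarietyAB (p : ℕ) : Set (AmbientAB K A B) :=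
  {T | ∃ U : Submodule K (Module.Dual K B), Module.finrank K U = p ∧
    T ∈ LinearMap.range (TensorProduct.map (LinearMap.id (R := K) (M := Module.Dual K A))
      (lam2Sub K B U).subtype)}

/-! ### The exterior square -/

/-- The exterior product `v ∧ w` as a bilinear map into the second exterior power. -/
def wedge (F V : Type*) [Field F] [AddCommGroup V] [Module F V] :
    V →ₗ[F] V →ₗ[F] ↥(⋀[F]^2 V) :=
  LinearMap.mk₂ F (fun v w => exteriorPower.ιMulti F 2 ![v, w])
    (fun a b c => by
      apply Subtype.ext; simp [ExteriorAlgebra.ιMulti_apply, add_mul])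
    (fun r a b => by
      apply Subtype.ext; simp [ExteriorAlgebra.ιMulti_apply])
    (fun a b c => by
      apply Subtype.ext; simp [ExteriorAlgebra.ιMulti_apply, mul_add])
    (fun r a b => by
      apply Subtype.ext; simp [ExteriorAlgebra.ιMulti_apply])

section Wedge

variable {F V N : Type*} [Field F] [AddCommGroup V] [Module F V] [AddCommGroup N] [Module F N]

lemma wedge_eq (v : Fin 2 → V) : wedge F V (v 0) (v 1) = exteriorPower.ιMulti F 2 v := by
  have : ![v 0, v 1] = v := by ext i; fin_cases i <;> rfl
  simp [wedge, this]

lemma coe_wedge (v w : V) :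
    (wedge F V v w : ExteriorAlgebra F V) = ExteriorAlgebra.ιMulti F 2 ![v, w] := rfl

lemma wedge_self (v : V) : wedge F V v v = 0 := by
  apply Subtype.ext
  simp [coe_wedge, ExteriorAlgebra.ιMulti_apply]

lemma wedge_swap (v w : V) : wedge F V v w = -wedge F V w v := by
  have h := wedge_self (F := F) (v + w)
  simp only [map_add, LinearMap.add_apply, wedge_self, zero_add, add_zero] at h
  exact eq_neg_of_add_eq_zero_right h

lemma exteriorSquare_hom_ext {f g : ↥(⋀[F]^2 V) →ₗ[F] N}
    (h : ∀ v w, f (wedge F V v w) = g (wedge F V v w)) : f = g := by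
  apply exteriorPower.linearMap_ext
  ext v
  simpa [wedge_eq] using h (v 0) (v 1)

/-- Contraction of a bivector with a linear form,
`(v ∧ w, ξ) ↦ ξ(v) w - ξ(w) v`. -/
def contr (F V : Type*) [Field F] [AddCommGroup V] [Module F V] :
    ↥(⋀[F]^2 V) →ₗ[F] Module.Dual F V →ₗ[F] V :=
  exteriorPower.alternatingMapLinearEquiv
    { toFun := fun v =>
        (LinearMap.applyₗ (R := F) (v 0)).smulRight (v 1)
          - (LinearMap.applyₗ (R := F) (v 1)).smulRight (v 0)
      map_update_add' := fun v i x y => by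
        ext ξ
        fin_cases i <;> simp <;> module
      map_update_smul' := fun v i r x => by
        ext ξ
        fin_cases i <;> simp <;> module
      map_eq_zero_of_eq' := fun v i j h hij => by
        ext ξ
        fin_cases i <;> fin_cases j <;> simp_all }

lemma contr_wedge (v w : V) (ξ : Module.Dual F V) :
    contr F V (wedge F V v w) ξ = ξ v • w - ξ w • v := by
  have := wedge_eq (F := F) ![v, w]
  simp only [Matrix.cons_val_zero, Matrix.cons_val_one] at this
  rw [this, contr, exteriorPower.alternatingMapLinearEquiv_apply_ιMulti]
  simp

lemma contr_skew (ω : ↥(⋀[F]^2 V)) (ξ η : Module.Dual F V) :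
    η (contr F V ω ξ) = -ξ (contr F V ω η) := by
  have : η ∘ₗ (contr F V).flip ξ = -(ξ ∘ₗ (contr F V).flip η) := by
    apply exteriorSquare_hom_ext
    intro v w
    simp [contr_wedge]
    ring
  exact LinearMap.congr_fun this ω

/-- Euler-type identity: a bivector is recovered from its contractions with the coordinate forms
of a basis. -/
lemma sum_wedge_contr {ι : Type*} [Fintype ι] (b : Module.Basis ι F V) (ω : ↥(⋀[F]^2 V)) :
    ∑ i, wedge F V (b i) (contr F V ω (b.coord i)) = (2 : F) • ω := by
  have : ∑ i, (wedge F V (b i)) ∘ₗ (contr F V).flip (b.coord i)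
      = (2 : F) • LinearMap.id := by
    apply exteriorSquare_hom_ext
    intro v w
    have hv : ∑ i, wedge F V (b i) (b.repr v i • w) = wedge F V v w := by
      conv_rhs => rw [← b.sum_repr v]
      simp only [map_sum, LinearMap.sum_apply, map_smul, LinearMap.smul_apply]
    have hw : ∑ i, wedge F V (b i) (b.repr w i • v) = wedge F V w v := by
      conv_rhs => rw [← b.sum_repr w]
      simp only [map_sum, LinearMap.sum_apply, map_smul, LinearMap.smul_apply]
    simp only [LinearMap.sum_apply, LinearMap.comp_apply, LinearMap.flip_apply, contr_wedge,
      map_sub, Finset.sum_sub_distrib, Module.Basis.coord_apply, hv, hw, LinearMap.smul_apply,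
      LinearMap.id_apply]
    rw [wedge_swap w v]
    module
  simpa using LinearMap.congr_fun this ω

/-- The subspace `Λ²U` of `Λ²V`. -/
def lam2 (U : Submodule F V) : Submodule F ↥(⋀[F]^2 V) :=
  Submodule.span F {x | ∃ v ∈ U, ∃ w ∈ U, x = wedge F V v w}

lemma wedge_mem_lam2 {U : Submodule F V} {v w : V} (hv : v ∈ U) (hw : w ∈ U) :
    wedge F V v w ∈ lam2 U := Submodule.subset_span ⟨v, hv, w, hw, rfl⟩

lemma contr_mem {U : Submodule F V} {ω : ↥(⋀[F]^2 V)} (hω : ω ∈ lam2 U) (ξ : Module.Dual F V) :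
    contr F V ω ξ ∈ U := by
  have : lam2 U ≤ U.comap ((contr F V).flip ξ) := by
    rw [lam2, Submodule.span_le]
    rintro _ ⟨v, hv, w, hw, rfl⟩
    simp only [Submodule.comap_coe, Set.mem_preimage, LinearMap.flip_apply, contr_wedge]
    exact U.sub_mem (U.smul_mem _ hw) (U.smul_mem _ hv)
  exact this hω

/-- If all contractions of `ω` lie in `U` then `ω ∈ Λ²U`: in a basis adapted to `U` and a
complement, skew-symmetry kills the contractions with the coordinate forms that vanish on `U`,
so the remaining terms of `sum_wedge_contr` lie in `Λ²U`. -/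
lemma mem_lam2_of_contr_mem [CharZero F] [Module.Finite F V] {U : Submodule F V}
    {ω : ↥(⋀[F]^2 V)} (h : ∀ ξ, contr F V ω ξ ∈ U) : ω ∈ lam2 U := by
  obtain ⟨C, hC⟩ := U.exists_isCompl
  let b := ((Module.finBasis F U).prod (Module.finBasis F C)).map
    (Submodule.prodEquivOfIsCompl U C hC)
  have hsum := sum_wedge_contr b ω
  have hmem : (2 : F) • ω ∈ lam2 U := by
    rw [← hsum]
    refine Submodule.sum_mem _ fun i _ => ?_
    rcases i with i | i
    · refine wedge_mem_lam2 ?_ (h _)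
      simp [b]
    · have hz : contr F V ω (b.coord (Sum.inr i)) = 0 := by
        rw [← Module.forall_dual_apply_eq_zero_iff F]
        intro η
        rw [contr_skew, neg_eq_zero]
        obtain ⟨y, hy⟩ : ∃ y : U, (y : V) = contr F V ω η := ⟨⟨_, h η⟩, rfl⟩
        rw [← hy]
        simp [b]
      rw [hz, map_zero]
      exact Submodule.zero_mem _
  have := (lam2 U).smul_mem (2 : F)⁻¹ hmem
  rwa [smul_smul, inv_mul_cancel₀ two_ne_zero, one_smul] at this

end Wedge

/-! ### Slices of tensors -/

section Slice

variable {F E M : Type*} [Field F] [AddCommGroup E] [Module F E] [AddCommGroup M] [Module F M]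

/-- The slice of a tensor in `E ⊗ M` along a linear form on `E`. -/
def slice (f : Module.Dual F E) : E ⊗[F] M →ₗ[F] M :=
  (TensorProduct.lid F M).toLinearMap ∘ₗ LinearMap.rTensor M f

lemma slice_tmul (f : Module.Dual F E) (e : E) (m : M) :
    slice f (e ⊗ₜ[F] m) = f e • m := by simp [slice]

lemma sum_tmul_slice {ι : Type*} [Fintype ι] (b : Module.Basis ι F E) (T : E ⊗[F] M) :
    T = ∑ i, b i ⊗ₜ[F] slice (b.coord i) T := by
  induction T with
  | zero => simp
  | add x y hx hy =>
    conv_lhs => rw [hx, hy]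
    simp [TensorProduct.tmul_add, Finset.sum_add_distrib]
  | tmul e m =>
    conv_lhs => rw [← b.sum_repr e]
    simp only [TensorProduct.sum_tmul, slice_tmul, Module.Basis.coord_apply,
      TensorProduct.tmul_smul, TensorProduct.smul_tmul']

lemma mem_range_map_subtype_iff [Module.Finite F E] (N : Submodule F M) (T : E ⊗[F] M) :
    T ∈ LinearMap.range (TensorProduct.map (LinearMap.id (R := F) (M := E)) N.subtype)
      ↔ ∀ f : Module.Dual F E, slice f T ∈ N := by
  constructor
  · rintro ⟨S, rfl⟩ f
    induction S with
    | zero => simp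
    | add x y hx hy => rw [map_add, map_add]; exact N.add_mem hx hy
    | tmul e m =>
      rw [TensorProduct.map_tmul, slice_tmul]
      exact N.smul_mem _ m.2
  · intro h
    rw [sum_tmul_slice (Module.finBasis F E) T]
    exact Submodule.sum_mem _ fun i _ =>
      ⟨Module.finBasis F E i ⊗ₜ ⟨_, h ((Module.finBasis F E).coord i)⟩, by simp⟩

end Slice

/-! ### Bivectors on a four-dimensional space -/

section Plucker

variable {F V : Type*} [Field F] [AddCommGroup V] [Module F V]

/-- The bivector on the vectors `u 0, …, u 3` with Plücker coordinates `p`, listed in the order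
`01, 02, 03, 12, 13, 23`. -/
def bivec (u : Fin 4 → V) : (Fin 6 → F) →ₗ[F] ↥(⋀[F]^2 V) :=
  Fintype.linearCombination F ![wedge F V (u 0) (u 1), wedge F V (u 0) (u 2),
    wedge F V (u 0) (u 3), wedge F V (u 1) (u 2), wedge F V (u 1) (u 3), wedge F V (u 2) (u 3)]

lemma bivec_apply (u : Fin 4 → V) (p : Fin 6 → F) :
    bivec u p = p 0 • wedge F V (u 0) (u 1) + p 1 • wedge F V (u 0) (u 2)
      + p 2 • wedge F V (u 0) (u 3) + p 3 • wedge F V (u 1) (u 2)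
      + p 4 • wedge F V (u 1) (u 3) + p 5 • wedge F V (u 2) (u 3) := by
  simp [bivec, Fintype.linearCombination_apply, Fin.sum_univ_succ]
  abel

/-- The Pfaffian (Plücker quadric) on the coordinates of `bivec`. -/
def pf {R : Type*} [CommRing R] (p : Fin 6 → R) : R := p 0 * p 5 - p 1 * p 4 + p 2 * p 3

/-- The polarization of `pf`. -/
def pfB {R : Type*} [CommRing R] (p q : Fin 6 → R) : R :=
  p 0 * q 5 + q 0 * p 5 - p 1 * q 4 - q 1 * p 4 + p 2 * q 3 + q 2 * p 3

lemma bivec_surj (u : Fin 4 → V) :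
    lam2 (Submodule.span F (Set.range u)) ≤ LinearMap.range (bivec (F := F) u) := by
  rw [lam2, Submodule.span_le]
  rintro _ ⟨v, hv, w, hw, rfl⟩
  obtain ⟨x, rfl⟩ := (Submodule.mem_span_range_iff_exists_fun F).1 hv
  obtain ⟨y, rfl⟩ := (Submodule.mem_span_range_iff_exists_fun F).1 hw
  refine ⟨![x 0 * y 1 - x 1 * y 0, x 0 * y 2 - x 2 * y 0, x 0 * y 3 - x 3 * y 0,
    x 1 * y 2 - x 2 * y 1, x 1 * y 3 - x 3 * y 1, x 2 * y 3 - x 3 * y 2], ?_⟩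
  rw [bivec_apply]
  simp only [Fin.sum_univ_four, map_add, map_smul, LinearMap.add_apply, LinearMap.smul_apply,
    wedge_self]
  rw [wedge_swap (u 1) (u 0), wedge_swap (u 2) (u 0), wedge_swap (u 3) (u 0),
    wedge_swap (u 2) (u 1), wedge_swap (u 3) (u 1), wedge_swap (u 3) (u 2)]
  simp
  module

/-- On the Plücker quadric, a bivector with nonzero `ab`-coordinate is decomposable. -/
lemma decomposable_of_ne_zero (a b c d : V) {p q r s t w : F} (hp : p ≠ 0)
    (h : p * w - q * t + r * s = 0) :
    p • wedge F V a b + q • wedge F V a c + r • wedge F V a d + s • wedge F V b c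
      + t • wedge F V b d + w • wedge F V c d
      = wedge F V (a - (s / p) • c - (t / p) • d) (p • b + q • c + r • d) := by
  have hw : w = (q * t - r * s) / p := by
    field_simp
    linear_combination h
  subst hw
  simp only [map_add, map_sub, map_smul, LinearMap.sub_apply, LinearMap.smul_apply, wedge_self]
  rw [wedge_swap c b, wedge_swap d b, wedge_swap d c]
  match_scalars <;> field_simp
  ring

/-- A bivector on four vectors that satisfies the Plücker relation is decomposable. -/
lemma decomposable_of_pf_eq_zero (u : Fin 4 → V) (p : Fin 6 → F) (h : pf p = 0) :
    ∃ v w, bivec u p = wedge F V v w := by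
  rw [bivec_apply]
  unfold pf at h
  by_cases h0 : p 0 = 0
  swap
  · exact ⟨_, _, decomposable_of_ne_zero _ _ _ _ h0 h⟩
  -- A nonzero coordinate is moved to the front by permuting the four vectors.
  by_cases h1 : p 1 = 0
  swap
  · refine ⟨_, _, Eq.trans ?_ (decomposable_of_ne_zero (u 0) (u 2) (u 1) (u 3)
      (q := p 0) (r := p 2) (s := -p 3) (t := p 5) (w := p 4) h1 (by linear_combination -h))⟩
    rw [wedge_swap (u 2) (u 1)]
    module
  by_cases h2 : p 2 = 0
  swap
  · refine ⟨_, _, Eq.trans ?_ (decomposable_of_ne_zero (u 0) (u 3) (u 1) (u 2)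
      (q := p 0) (r := p 1) (s := -p 4) (t := -p 5) (w := p 3) h2 (by linear_combination h))⟩
    rw [wedge_swap (u 3) (u 1), wedge_swap (u 3) (u 2)]
    module
  by_cases h3 : p 3 = 0
  · refine ⟨p 4 • u 1 + p 5 • u 2, u 3, ?_⟩
    simp [h0, h1, h2, h3]
  · refine ⟨_, _, Eq.trans ?_ (decomposable_of_ne_zero (u 1) (u 2) (u 3) (u 0)
      (q := p 4) (r := 0) (s := p 5) (t := 0) (w := 0) h3 (by ring))⟩
    rw [h0, h1, h2]
    module

end Plucker

/-! ### Pencils of bivectors -/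

section Pencil

variable {F V E : Type*} [Field F] [AddCommGroup V] [Module F V] [AddCommGroup E] [Module F E]

lemma pf_smul_add {R : Type*} [CommRing R] (x : R) (p q : Fin 6 → R) :
    pf (x • p + q) = pf p * x ^ 2 + pfB p q * x + pf q := by
  simp [pf, pfB]
  ring

/-- If the Pfaffian of the pencil spanned by two bivectors has two distinct roots, the bivectors
at the two roots are decomposable and span the pencil, so the tensor is a sum of two elements
`α ⊗ (v ∧ w)`. -/
lemma pencil_decomposable [IsAlgClosed F] [CharZero F] (e f : E) (u : Fin 4 → V)
    (p q : Fin 6 → F) (ha : pf p ≠ 0) (hd : pfB p q ^ 2 - 4 * pf p * pf q ≠ 0) :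
    ∃ (α β : E) (v w v' w' : V), e ⊗ₜ[F] bivec u p + f ⊗ₜ[F] bivec u q
      = α ⊗ₜ[F] wedge F V v w + β ⊗ₜ[F] wedge F V v' w' := by
  obtain ⟨s, hs⟩ := IsAlgClosed.exists_pow_nat_eq (pfB p q ^ 2 - 4 * pf p * pf q)
    (n := 2) (by norm_num)
  have hs0 : s ≠ 0 := by
    rintro rfl
    exact hd (by rw [← hs]; ring)
  have root : ∀ ε : F, ε ^ 2 = 1 →
      pf (((-pfB p q + ε * s) / (2 * pf p)) • p + q) = 0 := by
    intro ε hε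
    rw [pf_smul_add]
    field_simp
    linear_combination s ^ 2 * hε + hs
  have hr := root 1 (by ring)
  have hr' := root (-1) (by ring)
  obtain ⟨x, hx⟩ : ∃ x, x = (-pfB p q + 1 * s) / (2 * pf p) := ⟨_, rfl⟩
  obtain ⟨y, hy⟩ : ∃ y, y = (-pfB p q + -1 * s) / (2 * pf p) := ⟨_, rfl⟩
  rw [← hx] at hr
  rw [← hy] at hr'
  have hxy : x - y ≠ 0 := by
    have : x - y = s / pf p := by
      rw [hx, hy]
      field_simp
      ring
    rw [this]
    exact div_ne_zero hs0 ha
  obtain ⟨v, w, h1⟩ := decomposable_of_pf_eq_zero u _ hr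
  obtain ⟨v', w', h2⟩ := decomposable_of_pf_eq_zero u _ hr'
  -- The coefficients come from solving `η = x ω₀ + ω₁`, `η' = y ω₀ + ω₁` for `ω₀` and `ω₁`.
  refine ⟨(x - y)⁻¹ • e + (-y * (x - y)⁻¹) • f, (-(x - y)⁻¹) • e + (x * (x - y)⁻¹) • f,
    v, w, v', w', ?_⟩
  rw [← h1, ← h2]
  simp only [map_add, map_smul, TensorProduct.tmul_add, TensorProduct.add_tmul,
    TensorProduct.tmul_smul, ← TensorProduct.smul_tmul']
  match_scalars <;> field_simp <;> ring

/-- Along the segment from a given pair of bivectors to the pair `u₀∧u₁ + u₂∧u₃`,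
`u₀∧u₁ - u₂∧u₃`, the genericity condition of `pencil_decomposable` is the nonvanishing of a
nonzero one-variable polynomial. -/
lemma exists_generic_poly (p q : Fin 6 → F) [CharZero F] :
    ∃ (p' q' : Fin 6 → F) (G : Polynomial F), G ≠ 0 ∧ ∀ t, G.eval t ≠ 0 →
      pf (p + t • (p' - p)) ≠ 0 ∧
      pfB (p + t • (p' - p)) (q + t • (q' - q)) ^ 2
        - 4 * pf (p + t • (p' - p)) * pf (q + t • (q' - q)) ≠ 0 := by
  let p' : Fin 6 → F := ![1, 0, 0, 0, 0, 1]
  let q' : Fin 6 → F := ![1, 0, 0, 0, 0, -1]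
  let P : Fin 6 → Polynomial F := fun i =>
    Polynomial.C (p i) + Polynomial.X * Polynomial.C (p' i - p i)
  let Q : Fin 6 → Polynomial F := fun i =>
    Polynomial.C (q i) + Polynomial.X * Polynomial.C (q' i - q i)
  have hG : ∀ t, (pf P * (pfB P Q ^ 2 - 4 * pf P * pf Q)).eval t
      = pf (p + t • (p' - p)) * (pfB (p + t • (p' - p)) (q + t • (q' - q)) ^ 2
        - 4 * pf (p + t • (p' - p)) * pf (q + t • (q' - q))) := by
    intro t
    simp [pf, pfB, P, Q]
  refine ⟨p', q', pf P * (pfB P Q ^ 2 - 4 * pf P * pf Q), ?_, fun t ht => ?_⟩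
  -- At `t = 1` the Pfaffian of the pencil is `x² - 1`.
  · intro h0
    have h1 := hG 1
    rw [h0, one_smul, one_smul, add_sub_cancel, add_sub_cancel] at h1
    simp [pf, pfB, p', q'] at h1
  · rw [hG] at ht
    exact ⟨left_ne_zero_of_mul ht, right_ne_zero_of_mul ht⟩

end Pencil

/-! ### Zariski closure -/

section Closure

variable {F : Type} [Field F] {M : Type} [AddCommGroup M] [Module F M]

lemma mem_vanIdeal {S : Set M} {P : Coord F M} :
    P ∈ vanIdeal F S ↔ ∀ x ∈ S, evalAt F M x P = 0 := by
  simp [vanIdeal, Submodule.mem_iInf, RingHom.mem_ker]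

/-- A point lies in the Zariski closure of `S` if a line through it meets `S` in all but finitely
many points. -/
lemma mem_zcl_of_line [Infinite F] {S : Set M} (v₀ v₁ : M) {G : Polynomial F} (hG : G ≠ 0)
    (h : ∀ t : F, G.eval t ≠ 0 → v₀ + t • (v₁ - v₀) ∈ S) : v₀ ∈ zcl F S := by
  intro P hP
  rw [mem_vanIdeal] at hP
  let b := Module.Free.chooseBasis F M
  -- The restriction of `P` to the line, as a polynomial in the parameter.
  let H : Polynomial F := MvPolynomial.aeval (fun i =>
    Polynomial.C (b.repr v₀ i) + Polynomial.X * Polynomial.C (b.repr (v₁ - v₀) i)) P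
  have hH : ∀ t, H.eval t = evalAt F M (v₀ + t • (v₁ - v₀)) P := by
    intro t
    rw [← Polynomial.coe_aeval_eq_eval, evalAt]
    have := MvPolynomial.comp_aeval_apply (R := F) (fun i =>
      Polynomial.C (b.repr v₀ i) + Polynomial.X * Polynomial.C (b.repr (v₁ - v₀) i))
      (Polynomial.aeval t) P
    refine this.trans ?_
    congr 2
    funext i
    simp [b]
  have hGH : G * H = 0 := by
    apply Polynomial.funext
    intro t
    rw [Polynomial.eval_mul, Polynomial.eval_zero]
    by_cases ht : G.eval t = 0
    · rw [ht, zero_mul]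
    · rw [hH, hP _ (h t ht), mul_zero]
  have hH0 : H = 0 := (mul_eq_zero.1 hGH).resolve_left hG
  have := hH 0
  rw [hH0] at this
  simpa using this.symm

lemma exists_coord_of_linear [Module.Finite F M] (l : M →ₗ[F] F) :
    ∃ P : Coord F M, ∀ v, evalAt F M v P = l v := by
  let b := Module.Free.chooseBasis F M
  refine ⟨∑ i, MvPolynomial.C (l (b i)) * MvPolynomial.X i, fun v => ?_⟩
  conv_rhs => rw [← b.sum_repr v]
  simp only [evalAt, map_sum, map_mul, map_smul, MvPolynomial.aeval_X, MvPolynomial.aeval_C,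
    Algebra.algebraMap_self_apply, smul_eq_mul, mul_comm, b]

/-- Determinantal closedness: for a family of linear maps `L i`, the condition on `x` that the
vectors `L i x` span a space of dimension at most four passes to the Zariski closure, since it is
the vanishing of `5 × 5` minors. -/
lemma finrank_span_le_of_mem_zcl [Module.Finite F M] {V ι : Type*} [AddCommGroup V] [Module F V]
    [Module.Finite F V] (L : ι → M →ₗ[F] V) {S : Set M}
    (hS : ∀ x ∈ S, Module.finrank F (Submodule.span F (Set.range fun i => L i x)) ≤ 4)
    {T : M} (hT : T ∈ zcl F S) :
    Module.finrank F (Submodule.span F (Set.range fun i => L i T)) ≤ 4 := by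
  by_contra! hlt
  obtain ⟨f, hf, -, hli⟩ :=
    Submodule.exists_fun_fin_finrank_span_eq F (Set.range fun i => L i T)
  have hli5 := hli.comp (Fin.castLE hlt) (Fin.castLE_injective hlt)
  choose k hk using fun j : Fin 5 => hf (Fin.castLE hlt j)
  have hli' : LinearIndependent F fun j => L (k j) T := by
    simp only [hk]
    exact hli5
  -- A linear map sending the five independent vectors to the standard basis.
  obtain ⟨g, hg⟩ := LinearMap.exists_leftInverse_of_injective
    (Fintype.linearCombination F fun j => L (k j) T)
    (LinearMap.ker_eq_bot.2 hli'.fintypeLinearCombination_injective)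
  have hgT : ∀ j, g (L (k j) T) = Pi.single j 1 := by
    intro j
    have := LinearMap.congr_fun hg (Pi.single j 1)
    simpa [Fintype.linearCombination_apply_single] using this
  choose P hP using fun j i : Fin 5 =>
    exists_coord_of_linear ((LinearMap.proj i : (Fin 5 → F) →ₗ[F] F) ∘ₗ g ∘ₗ L (k j))
  have heval : ∀ x, evalAt F M x (Matrix.det (Matrix.of P))
      = Matrix.det (Matrix.of fun j => g (L (k j) x)) := by
    intro x
    rw [AlgHom.map_det]
    congr 1
    ext j i
    simp [hP]
  have hvan : Matrix.det (Matrix.of P) ∈ vanIdeal F S := by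
    rw [mem_vanIdeal]
    intro x hx
    rw [heval]
    apply Matrix.det_eq_zero_of_not_linearIndependent_rows
    intro hind
    have hind' : LinearIndependent F fun j => L (k j) x :=
      LinearIndependent.of_comp g hind
    have hle : Module.finrank F (Submodule.span F (Set.range fun j => L (k j) x)) ≤ 4 :=
      (Submodule.finrank_mono (Submodule.span_mono
        (by rintro _ ⟨j, rfl⟩; exact ⟨k j, rfl⟩))).trans (hS x hx)
    rw [finrank_span_eq_card hind', Fintype.card_fin] at hle
    omega
  have h0 := hT _ hvan
  rw [heval] at h0
  have h1 : (Matrix.of fun j => g (L (k j) T)) = (1 : Matrix (Fin 5) (Fin 5) F) := by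
    ext j i
    simp [hgT, Matrix.one_apply, Pi.single_apply, eq_comm]
  rw [h1, Matrix.det_one] at h0
  exact one_ne_zero h0

end Closure

/-! ### The secant variety -/

lemma exists_le_finrank_eq {F V : Type*} [Field F] [AddCommGroup V] [Module F V]
    [Module.Finite F V] {m : ℕ} (W : Submodule F V) (h : Module.finrank F W ≤ m)
    (hm : m ≤ Module.finrank F V) : ∃ U, W ≤ U ∧ Module.finrank F U = m := by
  induction m, h using Nat.le_induction with
  | base => exact ⟨W, le_rfl, rfl⟩
  | succ k hk ih =>
    obtain ⟨U, hWU, hU⟩ := ih (by omega)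
    obtain ⟨x, hx⟩ : ∃ x, x ∉ U := by
      by_contra! hall
      rw [(Submodule.eq_top_iff').2 hall, finrank_top] at hU
      omega
    exact ⟨U ⊔ Submodule.span F {x}, hWU.trans le_sup_left, by
      rw [Submodule.finrank_sup_span_singleton hx, hU]⟩

section Final

variable {F A B : Type} [Field F] [AddCommGroup A] [Module F A] [AddCommGroup B] [Module F B]

lemma lam2Sub_eq (U : Submodule F (Module.Dual F B)) : lam2Sub F B U = lam2 U := by
  have : Submodule.span F {x | ∃ v : Fin 2 → Module.Dual F B,
      (∀ i, v i ∈ U) ∧ x = ExteriorAlgebra.ιMulti F 2 v}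
      = (lam2 U).map (⋀[F]^2 (Module.Dual F B)).subtype := by
    rw [lam2, Submodule.map_span]
    congr 1
    ext x
    constructor
    · rintro ⟨v, hv, rfl⟩
      exact ⟨_, ⟨v 0, hv 0, v 1, hv 1, rfl⟩, by rw [wedge_eq]; rfl⟩
    · rintro ⟨_, ⟨v, hv, w, hw, rfl⟩, rfl⟩
      exact ⟨![v, w], by simp [Fin.forall_fin_two, hv, hw], rfl⟩
  rw [lam2Sub, this, Submodule.comap_map_eq_of_injective (Submodule.subtype_injective _)]

lemma tmul_wedge_mem (α : Module.Dual F A) (v w : Module.Dual F B) :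
    α ⊗ₜ[F] wedge F (Module.Dual F B) v w ∈ segGrassCone F A B :=
  ⟨α, _, ![v, w], rfl, rfl⟩

lemma exists_of_mem_segGrassCone {T : AmbientAB F A B} (h : T ∈ segGrassCone F A B) :
    ∃ α v w, T = α ⊗ₜ[F] wedge F (Module.Dual F B) v w := by
  obtain ⟨α, ω, v, hω, rfl⟩ := h
  refine ⟨α, v 0, v 1, ?_⟩
  congr 1
  apply Subtype.ext
  rw [hω, wedge_eq]
  rfl

/-- The rank variety as a determinantal condition on all the contractions of a tensor. -/
lemma mem_rankVarietyAB_iff [CharZero F] [Module.Finite F A] [Module.Finite F B] {m : ℕ}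
    (hB : m ≤ Module.finrank F B) (T : AmbientAB F A B) :
    T ∈ rankVarietyAB F A B m ↔
      Module.finrank F (Submodule.span F (Set.range
        fun i : Module.Dual F (Module.Dual F A) × Module.Dual F (Module.Dual F B) =>
          contr F (Module.Dual F B) (slice i.1 T) i.2)) ≤ m := by
  constructor
  · rintro ⟨U, hU, hT⟩
    rw [mem_range_map_subtype_iff, lam2Sub_eq] at hT
    rw [← hU]
    apply Submodule.finrank_mono
    rw [Submodule.span_le]
    rintro _ ⟨i, rfl⟩
    exact contr_mem (hT i.1) i.2
  · intro h
    obtain ⟨U, hWU, hU⟩ := exists_le_finrank_eq _ h (by rwa [Subspace.dual_finrank_eq])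
    refine ⟨U, hU, ?_⟩
    rw [mem_range_map_subtype_iff, lam2Sub_eq]
    exact fun f => mem_lam2_of_contr_mem fun ξ =>
      hWU (Submodule.subset_span ⟨(f, ξ), rfl⟩)

lemma finrank_contr_le_of_secant {T : AmbientAB F A B} [Module.Finite F B]
    (hT : ∃ x ∈ segGrassCone F A B, ∃ y ∈ segGrassCone F A B, T = x + y) :
    Module.finrank F (Submodule.span F (Set.range
        fun i : Module.Dual F (Module.Dual F A) × Module.Dual F (Module.Dual F B) =>
          contr F (Module.Dual F B) (slice i.1 T) i.2)) ≤ 4 := by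
  obtain ⟨x, hx, y, hy, rfl⟩ := hT
  obtain ⟨α, v, w, rfl⟩ := exists_of_mem_segGrassCone hx
  obtain ⟨β, v', w', rfl⟩ := exists_of_mem_segGrassCone hy
  have hmem : ∀ j, ![v, w, v', w'] j ∈ Submodule.span F (Set.range ![v, w, v', w']) :=
    fun j => Submodule.subset_span ⟨j, rfl⟩
  refine (Submodule.finrank_mono (Submodule.span_le.2 ?_)).trans
    (finrank_range_le_card (R := F) ![v, w, v', w'])
  rintro _ ⟨i, rfl⟩
  refine contr_mem ?_ i.2
  rw [map_add, slice_tmul, slice_tmul]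
  exact Submodule.add_mem _ (Submodule.smul_mem _ _ (wedge_mem_lam2 (hmem 0) (hmem 1)))
    (Submodule.smul_mem _ _ (wedge_mem_lam2 (hmem 2) (hmem 3)))

/-- For a two-dimensional `A`, every tensor in the rank variety `R₄` lies on a line all but
finitely many of whose points are sums of two elements `α ⊗ (v ∧ w)`. -/
lemma mem_secantCone_of_mem_rankVariety [IsAlgClosed F] [CharZero F] [Module.Finite F A]
    [Module.Finite F B] (hA : Module.finrank F A = 2) {T : AmbientAB F A B}
    (hT : T ∈ rankVarietyAB F A B 4) : T ∈ secantCone F (segGrassCone F A B) := by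
  obtain ⟨U, hU, hT⟩ := hT
  rw [mem_range_map_subtype_iff, lam2Sub_eq] at hT
  let e : Module.Basis (Fin 2) F (Module.Dual F A) :=
    Module.finBasisOfFinrankEq F _ (by rw [Subspace.dual_finrank_eq, hA])
  have : Module.Free F U := Module.Free.of_divisionRing F U
  let b : Module.Basis (Fin 4) F U := Module.finBasisOfFinrankEq F U hU
  let u : Fin 4 → Module.Dual F B := fun i => b i
  have hu : Submodule.span F (Set.range u) = U := by
    have : Set.range u = U.subtype '' Set.range b := by
      rw [← Set.range_comp]; rfl
    rw [this, ← Submodule.map_span, b.span_eq, Submodule.map_top, Submodule.range_subtype]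
  rw [← hu] at hT
  obtain ⟨p, hp⟩ := bivec_surj u (hT (e.coord 0))
  obtain ⟨q, hq⟩ := bivec_surj u (hT (e.coord 1))
  have hTe : T = e 0 ⊗ₜ[F] bivec u p + e 1 ⊗ₜ[F] bivec u q := by
    rw [hp, hq, ← Fin.sum_univ_two (fun i => e i ⊗ₜ[F] slice (e.coord i) T)]
    exact sum_tmul_slice e T
  obtain ⟨p', q', G, hG, hgen⟩ := exists_generic_poly p q
  refine mem_zcl_of_line T (e 0 ⊗ₜ[F] bivec u p' + e 1 ⊗ₜ[F] bivec u q') hG fun t ht => ?_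
  obtain ⟨h1, h2⟩ := hgen t ht
  obtain ⟨α, β, v, w, v', w', h⟩ := pencil_decomposable (e 0) (e 1) u _ _ h1 h2
  refine ⟨_, tmul_wedge_mem α v w, _, tmul_wedge_mem β v' w', ?_⟩
  rw [← h, hTe]
  simp only [map_add, map_sub, map_smul, TensorProduct.tmul_add, TensorProduct.tmul_sub,
    TensorProduct.tmul_smul]
  module

end Final

theorem stmt14 (hA : Module.finrank K A = 2) (hB : 5 ≤ Module.finrank K B) :
    secantCone K (segGrassCone K A B) = rankVarietyAB K A B 4 := by
  apply Set.Subset.antisymm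
  · intro T hT
    rw [mem_rankVarietyAB_iff (by omega)]
    exact finrank_span_le_of_mem_zcl
      (fun i : Module.Dual K (Module.Dual K A) × Module.Dual K (Module.Dual K B) =>
        (contr K (Module.Dual K B)).flip i.2 ∘ₗ slice i.1)
      (fun x hx => finrank_contr_le_of_secant hx) hT
  · exact fun T hT => mem_secantCone_of_mem_rankVariety hA hT

end Stmt14

end
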